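/- arXiv:2405.03186 — 4 statements merged into one kernel-verified Lean document; each statement's English description precedes it below -/
import Mathlib

section
/- Let D be a positive integer, let a be an integer with gcd(a,D)=1, and let χ₀ be the principal Dirichlet character (mod D). Then for every positive integer n one has χ₀(n)·e(-an/D) = (1/φ(D)) · Σ_{χ (mod D)} μ(D/f_χ) · χ*(a) · conj(χ*(D/f_χ)) · conj(τ(χ*)) · χ(n), where the sum runs over all Dirichlet characters χ modulo D. -/
/-!
Write `τ(χ, ψ) = ∑_b χ(b) ψ(b)`. For a unit `k` modulo `D`, orthogonality of characters gives
`∑_χ χ(k) τ(χ⁻¹, ψ) = φ(D) ψ(k)` for every additive character `ψ`; take `k = an` and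
`ψ(x) = e(-x/D)`, for which `τ(χ⁻¹, ψ) = conj τ(χ)`. The Gauss sum of the possibly imprimitive
character `χ`, of conductor `f`, is then evaluated by `τ(χ) = μ(D/f) χ*(D/f) τ(χ*)`.

To evaluate it, let `χ` modulo `N` be induced by any `ψ` modulo `f`. Möbius inversion removes the
condition `(b, N) = 1` and writes `τ(χ)` as `∑_{d ∣ N} μ(d) ψ(d) ∑_{c < N/d} ψ(c) e(c/(N/d))`.
A term with `ψ(d) ≠ 0` has `(d, f) = 1`, so `f ∣ N/d`. Translating the inner sum by `f` fixes
`ψ(c)` and multiplies the sum by `e(f/(N/d))`, so the sum vanishes unless `d = N/f`.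
-/

/-- `e x = exp(2πix)`. -/
noncomputable def e (x : ℝ) : ℂ := Complex.exp (2 * Real.pi * Complex.I * x)

/-- The Gauss sum `τ(ψ) = ∑_{b mod N} ψ(b) e(b/N)` of a Dirichlet character `ψ (mod N)`. -/
noncomputable def gaussSumOf {N : ℕ} (ψ : DirichletCharacter ℂ N) : ℂ :=
  ∑ b ∈ Finset.range N, ψ (b : ZMod N) * e ((b : ℝ) / N)

open ArithmeticFunction (moebius)

lemma sum_mul_addChar_eq_zero {A R : Type*} [AddGroup A] [Fintype A] [CommRing R] [IsDomain R]
    {g : A → R} {ψ : AddChar A R} {t : A} (hg : ∀ x, g (x + t) = g x) (hψ : ψ t ≠ 1) :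
    ∑ x, g x * ψ x = 0 := by
  refine eq_zero_of_mul_eq_self_left hψ ?_
  calc ψ t * ∑ x, g x * ψ x
      = ∑ x, g (x + t) * ψ (x + t) := by
        rw [Finset.mul_sum]
        refine Finset.sum_congr rfl fun x _ => ?_
        rw [hg, AddChar.map_add_eq_mul]
        ring
    _ = ∑ x, g x * ψ x := Equiv.sum_comp (Equiv.addRight t) fun x => g x * ψ x

lemma sum_range_natCast_zmod {M : Type*} [AddCommMonoid M] (N : ℕ) [NeZero N] (g : ZMod N → M) :
    ∑ b ∈ Finset.range N, g b = ∑ x, g x :=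
  Finset.sum_nbij' (fun b => (b : ZMod N)) ZMod.val (by simp) (by simp [ZMod.val_lt])
    (fun b hb => ZMod.val_cast_of_lt (Finset.mem_range.1 hb)) (by simp) (by simp)

lemma sum_range_mul_filter_dvd {M : Type*} [AddCommMonoid M] {d : ℕ} (hd : d ≠ 0) (k : ℕ)
    (g : ℕ → M) :
    ∑ b ∈ Finset.range (d * k) with d ∣ b, g b = ∑ c ∈ Finset.range k, g (d * c) := by
  have himage : {b ∈ Finset.range (d * k) | d ∣ b} = (Finset.range k).image (d * ·) := by
    ext b
    simp only [Finset.mem_filter, Finset.mem_range, Finset.mem_image]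
    constructor
    · rintro ⟨hb, c, rfl⟩
      exact ⟨c, Nat.lt_of_mul_lt_mul_left hb, rfl⟩
    · rintro ⟨c, hc, rfl⟩
      exact ⟨Nat.mul_lt_mul_of_pos_left hc (Nat.pos_of_ne_zero hd), dvd_mul_right d c⟩
  rw [himage, Finset.sum_image (mul_right_injective₀ hd).injOn]

lemma sum_divisors_moebius (n : ℕ) : ∑ d ∈ n.divisors, moebius d = if n = 1 then 1 else 0 := by
  rw [← ArithmeticFunction.coe_mul_zeta_apply, ArithmeticFunction.moebius_mul_coe_zeta,
    ArithmeticFunction.one_apply]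

lemma sum_filter_coprime_eq_sum_moebius_smul {M : Type*} [AddCommGroup M] (s : Finset ℕ) {N : ℕ}
    (hN : N ≠ 0) (g : ℕ → M) :
    ∑ b ∈ s with b.Coprime N, g b = ∑ d ∈ N.divisors, moebius d • ∑ b ∈ s with d ∣ b, g b := by
  have hdivisors (b : ℕ) : {d ∈ N.divisors | d ∣ b} = (b.gcd N).divisors := by
    ext d
    simp [Nat.dvd_gcd_iff, hN, and_comm]
  simp_rw [Finset.smul_sum, Finset.sum_filter]
  rw [Finset.sum_comm]
  refine Finset.sum_congr rfl fun b _ => ?_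
  rw [← Finset.sum_filter, hdivisors, ← Finset.sum_smul, sum_divisors_moebius, ite_smul, one_smul,
    zero_smul]

lemma changeLevel_natCast {R : Type*} [CommMonoidWithZero R] {f N : ℕ} (hf : f ∣ N)
    (ψ : DirichletCharacter R f) (b : ℕ) :
    DirichletCharacter.changeLevel hf ψ (b : ZMod N) =
      if b.Coprime N then ψ (b : ZMod f) else 0 := by
  split_ifs with h
  · exact mod_cast ψ.changeLevel_eq_cast_of_dvd' hf (Nat.isCoprime_iff_coprime.2 h)
  · exact MulChar.map_nonunit _ (mt (ZMod.isUnit_iff_coprime b N).1 h)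

lemma e_intCast_div {N : ℕ} [NeZero N] (j : ℤ) :
    e ((j : ℝ) / N) = ZMod.stdAddChar (j : ZMod N) := by
  rw [ZMod.stdAddChar_coe, e]
  push_cast
  rw [mul_div_assoc]

lemma e_natCast_div {N : ℕ} [NeZero N] (j : ℕ) :
    e ((j : ℝ) / N) = ZMod.stdAddChar (j : ZMod N) := by
  simpa using e_intCast_div (N := N) j

section GaussSum

variable {N : ℕ} [NeZero N]

lemma gaussSumOf_eq_gaussSum (χ : DirichletCharacter ℂ N) :
    gaussSumOf χ = gaussSum χ ZMod.stdAddChar := by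
  simp_rw [gaussSumOf, gaussSum, e_natCast_div]
  exact sum_range_natCast_zmod N fun x => χ x * ZMod.stdAddChar x

lemma conj_gaussSumOf (χ : DirichletCharacter ℂ N) :
    (starRingEnd ℂ) (gaussSumOf χ) = gaussSum χ⁻¹ ZMod.stdAddChar⁻¹ := by
  rw [gaussSumOf_eq_gaussSum, starRingEnd_apply, star_gaussSum_eq]

lemma sum_char_mul_gaussSum_inv {R : Type*} [CommRing R] [IsDomain R]
    [HasEnoughRootsOfUnity R (Monoid.exponent (ZMod N)ˣ)] {k : ZMod N} (hk : IsUnit k)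
    (ψ : AddChar (ZMod N) R) :
    ∑ χ : DirichletCharacter R N, χ k * gaussSum χ⁻¹ ψ = N.totient * ψ k := by
  have hinv (χ : DirichletCharacter R N) : χ⁻¹ k⁻¹ = χ k := by
    obtain ⟨u, rfl⟩ := hk
    rw [MulChar.inv_apply, ZMod.inv_coe_unit, Ring.inverse_unit, inv_inv]
  calc ∑ χ : DirichletCharacter R N, χ k * gaussSum χ⁻¹ ψ
      = ∑ χ : DirichletCharacter R N, χ k⁻¹ * gaussSum χ ψ :=
        Fintype.sum_equiv (Equiv.inv _) _ _ fun χ => by rw [Equiv.inv_apply, hinv]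
    _ = ∑ b, (∑ χ : DirichletCharacter R N, χ k⁻¹ * χ b) * ψ b := by
        simp_rw [gaussSum, Finset.mul_sum, Finset.sum_mul, mul_assoc]
        exact Finset.sum_comm
    _ = N.totient * ψ k := by
        simp [DirichletCharacter.sum_char_inv_mul_char_eq R hk]

end GaussSum

section ChangeLevel

variable {f N : ℕ} [NeZero N]

lemma sum_range_char_mul_e_eq_zero (hf : f ∣ N) (hne : f ≠ N) (ψ : DirichletCharacter ℂ f) :
    ∑ c ∈ Finset.range N, ψ (c : ZMod f) * e ((c : ℝ) / N) = 0 := by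
  have hnontrivial : ZMod.stdAddChar (f : ZMod N) ≠ 1 := by
    rw [← AddChar.map_zero_eq_one (ZMod.stdAddChar (N := N)),
      ZMod.injective_stdAddChar.ne_iff, Ne, ZMod.natCast_eq_zero_iff]
    exact fun h => hne (Nat.dvd_antisymm hf h)
  have hperiodic (x : ZMod N) :
      ψ (ZMod.castHom hf (ZMod f) (x + f)) = ψ (ZMod.castHom hf (ZMod f) x) := by
    rw [map_add, map_natCast, ZMod.natCast_self, add_zero]
  rw [← sum_mul_addChar_eq_zero (g := fun x => ψ (ZMod.castHom hf (ZMod f) x)) hperiodic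
    hnontrivial, ← sum_range_natCast_zmod]
  simp_rw [map_natCast, e_natCast_div]

lemma sum_filter_dvd_char_mul_e {d : ℕ} (hf : f ∣ N) (hd : d ∣ N) (ψ : DirichletCharacter ℂ f) :
    ∑ b ∈ Finset.range N with d ∣ b, ψ (b : ZMod f) * e ((b : ℝ) / N) =
      if d = N / f then ψ (d : ZMod f) * gaussSumOf ψ else 0 := by
  obtain ⟨k, rfl⟩ := hd
  obtain ⟨hd0, hk0⟩ := mul_ne_zero_iff.1 (NeZero.ne (d * k))
  have : NeZero k := ⟨hk0⟩
  have hfactor : ∑ b ∈ Finset.range (d * k) with d ∣ b, ψ (b : ZMod f) * e ((b : ℝ) / ↑(d * k)) =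
      ψ (d : ZMod f) * ∑ c ∈ Finset.range k, ψ (c : ZMod f) * e ((c : ℝ) / k) := by
    rw [sum_range_mul_filter_dvd hd0, Finset.mul_sum]
    refine Finset.sum_congr rfl fun c _ => ?_
    push_cast
    rw [map_mul, mul_assoc, mul_div_mul_left _ _ (Nat.cast_ne_zero.2 hd0)]
  rw [hfactor]
  by_cases hcop : d.Coprime f
  · have hfk : f ∣ k := hcop.symm.dvd_of_dvd_mul_left hf
    have hquot : d = d * k / f ↔ f = k := by
      rw [eq_comm, Nat.div_eq_iff_eq_mul_left (Nat.pos_of_dvd_of_pos hfk (NeZero.pos k)) hf,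
        Nat.mul_right_inj hd0, eq_comm]
    simp_rw [hquot]
    split_ifs with h
    · subst h
      rfl
    · rw [sum_range_char_mul_e_eq_zero hfk h, mul_zero]
  · simp [ψ.map_nonunit (mt (ZMod.isUnit_iff_coprime d f).1 hcop)]

lemma gaussSumOf_changeLevel (hf : f ∣ N) (ψ : DirichletCharacter ℂ f) :
    gaussSumOf (DirichletCharacter.changeLevel hf ψ) =
      moebius (N / f) * ψ ((N / f : ℕ) : ZMod f) * gaussSumOf ψ := by
  calc gaussSumOf (DirichletCharacter.changeLevel hf ψ)
      = ∑ b ∈ Finset.range N with b.Coprime N, ψ (b : ZMod f) * e ((b : ℝ) / N) := by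
        simp_rw [gaussSumOf, changeLevel_natCast, ite_mul, zero_mul, Finset.sum_filter]
    _ = ∑ d ∈ N.divisors, moebius d •
          ∑ b ∈ Finset.range N with d ∣ b, ψ (b : ZMod f) * e ((b : ℝ) / N) :=
        sum_filter_coprime_eq_sum_moebius_smul _ (NeZero.ne N) _
    _ = ∑ d ∈ N.divisors, moebius d • if d = N / f then ψ (d : ZMod f) * gaussSumOf ψ else 0 :=
        Finset.sum_congr rfl fun d hd => by
          rw [sum_filter_dvd_char_mul_e hf (Nat.dvd_of_mem_divisors hd)]
    _ = moebius (N / f) * ψ ((N / f : ℕ) : ZMod f) * gaussSumOf ψ := by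
        simp [Nat.div_dvd_of_dvd hf, NeZero.ne N, mul_assoc]

lemma gaussSumOf_eq_mul_gaussSumOf_primitiveCharacter (χ : DirichletCharacter ℂ N) :
    gaussSumOf χ = moebius (N / χ.conductor) *
      χ.primitiveCharacter ((N / χ.conductor : ℕ) : ZMod χ.conductor) *
      gaussSumOf χ.primitiveCharacter := by
  rw [← gaussSumOf_changeLevel χ.conductor_dvd_level, χ.changeLevel_primitiveCharacter]

end ChangeLevel

/-- Lemma 3.1: for `(a, D) = 1` and the principal character `χ₀ (mod D)`,
`χ₀(n) e(-an/D) = (1/φ(D)) ∑_{χ (mod D)} μ(D/f_χ) χ*(a) conj(χ*(D/f_χ)) conj(τ(χ*)) χ(n)`. -/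
theorem principal_times_e_eq_sum_over_characters
    (D : ℕ) (hD : 0 < D) (a : ℤ) (ha : a.gcd D = 1) (n : ℕ) (hn : 0 < n) :
    (1 : DirichletCharacter ℂ D) (n : ZMod D) * e (-((a : ℝ) * n) / D) =
      (D.totient : ℂ)⁻¹ *
        ∑ χ : DirichletCharacter ℂ D,
          (ArithmeticFunction.moebius (D / χ.conductor) : ℂ) *
            χ.primitiveCharacter ((a : ZMod χ.conductor)) *
            (starRingEnd ℂ) (χ.primitiveCharacter (((D / χ.conductor : ℕ) : ZMod χ.conductor))) *
            (starRingEnd ℂ) (gaussSumOf χ.primitiveCharacter) *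
            χ (n : ZMod D) := by
  have : NeZero D := ⟨hD.ne'⟩
  have haD : IsCoprime a (D : ℤ) := Int.isCoprime_iff_gcd_eq_one.2 ha
  by_cases hnD : IsUnit (n : ZMod D)
  · have hunit : IsUnit ((a * n : ℤ) : ZMod D) := by
      push_cast
      exact ((ZMod.coe_int_isUnit_iff_isCoprime a D).2 haD.symm).mul hnD
    have he : e (-((a : ℝ) * n) / D) = ZMod.stdAddChar⁻¹ ((a * n : ℤ) : ZMod D) := by
      rw [AddChar.inv_apply, ← Int.cast_neg, ← e_intCast_div]
      push_cast
      rfl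
    have hφ : (D.totient : ℂ) ≠ 0 := Nat.cast_ne_zero.2 (Nat.totient_pos.2 hD).ne'
    rw [MulChar.one_apply hnD, one_mul, he, eq_inv_mul_iff_mul_eq₀ hφ,
      ← sum_char_mul_gaussSum_inv hunit]
    refine Finset.sum_congr rfl fun χ _ => ?_
    rw [← conj_gaussSumOf, gaussSumOf_eq_mul_gaussSumOf_primitiveCharacter,
      χ.primitiveCharacter_apply_of_isCoprime haD]
    push_cast
    simp only [map_mul, map_intCast]
    ring
  · simp [MulChar.map_nonunit _ hnD]
end

section
/- Let D be a positive squarefree integer and let a : ℕ≥1 → ℂ with a(1)=1 split polynomially at every prime p dividing D. Then for every positive integer n one has a(n)·𝟙[gcd(n,D)=1] = Σ_{m | gcd(n, D*)} B_m · a(n/m), where the sum runs over the positive divisors m of gcd(n, D*). -/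
/-!
Across a prime `p`, the truncated Dirichlet convolution `∑_{m ∣ gcd(n, N)} B_m a(n / m)` splits off
a local factor: for `n = p ^ k * n'` and `N = p ^ j * N'` with `p ∤ n', N'` it equals
`(∑_{ℓ ≤ min k j} B_{p^ℓ} a(p ^ (k - ℓ))) * ∑_{m ∣ gcd(n', N')} B_m a(n' / m)`. At `N = D*` and
`k ≥ 1` the local factor is the recurrence in the definition of splitting, so a single prime common
to `n` and `D` annihilates the sum. If there is none, only the term `m = 1` survives.
-/

/-- The data `(∂, A)` witnesses that the sequence `a` splits polynomially at the prime `p`: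
`a` is multiplicative across powers of `p`, `A p 0 = 1`, `A p ∂_p ≠ 0`, and the local factor
`∑_{ℓ≥0} a(p^ℓ) p^{-ℓs}` has inverse `∑_{ℓ=0}^{∂_p} A_ℓ(p) p^{-ℓs}`, i.e.
`∑_{ℓ=0}^{min(k,∂_p)} A_ℓ(p) a(p^{k-ℓ}) = 0` for all `k ≥ 1`. -/
def SplitsPolynomiallyAt (a : ℕ → ℂ) (dd : ℕ → ℕ) (A : ℕ → ℕ → ℂ) (p : ℕ) : Prop :=
  (∀ k n : ℕ, ¬ p ∣ n → a (p ^ k * n) = a (p ^ k) * a n) ∧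
  A p 0 = 1 ∧ A p (dd p) ≠ 0 ∧
  (∀ k : ℕ, 1 ≤ k → ∑ ℓ ∈ Finset.range (min k (dd p) + 1), A p ℓ * a (p ^ (k - ℓ)) = 0)

/-- `B m = ∏_{p^ℓ ∥ m} A_ℓ(p)`. -/
noncomputable def Bcoef (A : ℕ → ℕ → ℂ) (m : ℕ) : ℂ :=
  ∏ p ∈ m.primeFactors, A p (m.factorization p)

/-- `D* = ∏_{p | D} p^{∂_p}`. -/
def Dstar (D : ℕ) (dd : ℕ → ℕ) : ℕ := ∏ p ∈ D.primeFactors, p ^ dd p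

/-- Multiplicativity of `f` across the powers of `p`: the first clause of splitting polynomially at
`p`, isolated because the coefficients `B_m` satisfy it too. -/
def IsMultiplicativeAt {R : Type*} [Mul R] (f : ℕ → R) (p : ℕ) : Prop :=
  ∀ k n : ℕ, ¬ p ∣ n → f (p ^ k * n) = f (p ^ k) * f n

section FactorizationProd

variable {R : Type*} [CommMonoid R] {A : ℕ → ℕ → R} {p : ℕ}

lemma prod_factorization_mul_of_coprime {m n : ℕ} (hmn : m.Coprime n) :
    (m * n).factorization.prod A = m.factorization.prod A * n.factorization.prod A := by
  rw [Nat.factorization_mul_of_coprime hmn,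
    Finsupp.prod_add_index_of_disjoint hmn.disjoint_primeFactors]

lemma prod_factorization_prime_pow (hp : p.Prime) (hA : A p 0 = 1) (k : ℕ) :
    (p ^ k).factorization.prod A = A p k := by
  rw [hp.factorization_pow, Finsupp.prod_single_index hA]

lemma isMultiplicativeAt_prod_factorization (hp : p.Prime) :
    IsMultiplicativeAt (fun m ↦ m.factorization.prod A) p := fun k _ hn ↦
  prod_factorization_mul_of_coprime ((hp.coprime_iff_not_dvd.2 hn).pow_left k)

end FactorizationProd

lemma sum_divisors_mul_of_coprime {M : Type*} [AddCommMonoid M] {m n : ℕ} (hmn : m.Coprime n)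
    (f : ℕ → M) :
    ∑ d ∈ (m * n).divisors, f d = ∑ x ∈ m.divisors, ∑ y ∈ n.divisors, f (x * y) := by
  rw [Nat.divisors_mul, Finset.mul_def, Finset.sum_image hmn.mul_injOn_divisors,
    Finset.sum_product]

lemma gcd_pow_pow (b k j : ℕ) : (b ^ k).gcd (b ^ j) = b ^ min k j := by
  rcases le_total k j with h | h
  · rw [min_eq_left h, Nat.gcd_eq_left (pow_dvd_pow b h)]
  · rw [min_eq_right h, Nat.gcd_eq_right (pow_dvd_pow b h)]

lemma gcd_pow_mul_pow_mul {b n N : ℕ} (hn : b.Coprime n) (hN : b.Coprime N) (k j : ℕ) :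
    (b ^ k * n).gcd (b ^ j * N) = b ^ min k j * n.gcd N := by
  rw [(hN.pow_left j).gcd_mul, (hn.pow_left j).symm.gcd_mul_right_cancel,
    (hN.pow_left k).gcd_mul_left_cancel, gcd_pow_pow]

lemma sum_divisors_gcd_prime_pow_mul {R : Type*} [NonUnitalCommSemiring R] {f g : ℕ → R}
    {p n N : ℕ} (hp : p.Prime) (hf : IsMultiplicativeAt f p) (hg : IsMultiplicativeAt g p)
    (hn : ¬ p ∣ n) (hN : ¬ p ∣ N) (k j : ℕ) :
    ∑ m ∈ ((p ^ k * n).gcd (p ^ j * N)).divisors, f m * g (p ^ k * n / m) =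
      (∑ l ∈ Finset.range (min k j + 1), f (p ^ l) * g (p ^ (k - l))) *
        ∑ m ∈ (n.gcd N).divisors, f m * g (n / m) := by
  have hpn : p.Coprime n := hp.coprime_iff_not_dvd.2 hn
  have hpN : p.Coprime N := hp.coprime_iff_not_dvd.2 hN
  have hcop : (p ^ min k j).Coprime (n.gcd N) :=
    (hpn.coprime_dvd_right (Nat.gcd_dvd_left n N)).pow_left _
  rw [gcd_pow_mul_pow_mul hpn hpN, sum_divisors_mul_of_coprime hcop,
    Nat.sum_divisors_prime_pow hp, Finset.sum_mul_sum]
  refine Finset.sum_congr rfl fun l hl ↦ Finset.sum_congr rfl fun m hm ↦ ?_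
  have hlk : l ≤ k := (Finset.mem_range_succ_iff.1 hl).trans (min_le_left k j)
  have hmn : m ∣ n := (Nat.dvd_of_mem_divisors hm).trans (Nat.gcd_dvd_left n N)
  have hquot : p ^ k * n / (p ^ l * m) = p ^ (k - l) * (n / m) := by
    rw [Nat.mul_div_mul_comm (pow_dvd_pow p hlk) hmn, Nat.pow_div hlk hp.pos]
  rw [hquot, hf l m fun h ↦ hn (h.trans hmn),
    hg (k - l) (n / m) fun h ↦ hn (h.trans (Nat.div_dvd_of_dvd hmn)), mul_mul_mul_comm]

section Dstar

variable {D : ℕ}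

lemma coprime_Dstar_right {n : ℕ} (h : n.Coprime D) (dd : ℕ → ℕ) : n.Coprime (Dstar D dd) :=
  Nat.Coprime.prod_right fun _ hp ↦
    (h.coprime_dvd_right (Nat.dvd_of_mem_primeFactors hp)).pow_right _

lemma exists_Dstar_eq_pow_mul_and_not_dvd {p : ℕ} (hp : p ∈ D.primeFactors) (dd : ℕ → ℕ) :
    ∃ N, ¬ p ∣ N ∧ Dstar D dd = p ^ dd p * N := by
  refine ⟨∏ q ∈ D.primeFactors.erase p, q ^ dd q, fun h ↦ ?_,
    (Finset.mul_prod_erase _ _ hp).symm⟩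
  have hp' : p.Prime := Nat.prime_of_mem_primeFactors hp
  obtain ⟨q, hq, hpq⟩ := (hp'.prime.dvd_finsetProd_iff _).1 h
  obtain ⟨hqp, hqD⟩ := Finset.mem_erase.1 hq
  exact hqp (Nat.prime_eq_prime_of_dvd_pow hp' (Nat.prime_of_mem_primeFactors hqD) hpq).symm

end Dstar

theorem indicator_coprime_eq_sum_divisors_general {R : Type*} [CommSemiring R] {D : ℕ}
    (hD : D ≠ 0) {a : ℕ → R} {dd : ℕ → ℕ} {A : ℕ → ℕ → R}
    (ha : ∀ p ∈ D.primeFactors, IsMultiplicativeAt a p)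
    (hA : ∀ p ∈ D.primeFactors, A p 0 = 1)
    (hrec : ∀ p ∈ D.primeFactors, ∀ k : ℕ, 1 ≤ k →
      ∑ l ∈ Finset.range (min k (dd p) + 1), A p l * a (p ^ (k - l)) = 0)
    {n : ℕ} (hn : n ≠ 0) :
    a n * (if n.gcd D = 1 then 1 else 0) =
      ∑ m ∈ (n.gcd (Dstar D dd)).divisors, m.factorization.prod A * a (n / m) := by
  by_cases hnD : n.gcd D = 1
  · simp [hnD, (coprime_Dstar_right hnD dd).gcd_eq_one]
  obtain ⟨p, hp, hpn, hpD⟩ := Nat.Prime.not_coprime_iff_dvd.1 hnD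
  have hpmem : p ∈ D.primeFactors := Nat.mem_primeFactors.2 ⟨hp, hpD, hD⟩
  obtain ⟨N, hpN, hN⟩ := exists_Dstar_eq_pow_mul_and_not_dvd hpmem dd
  obtain ⟨k, n', hpn', rfl⟩ := Nat.exists_eq_pow_mul_and_not_dvd hn p hp.ne_one
  have hk : 1 ≤ k := Nat.one_le_iff_ne_zero.2 fun h ↦ hpn' (by simpa [h] using hpn)
  have hlocal : ∑ l ∈ Finset.range (min k (dd p) + 1),
      (p ^ l).factorization.prod A * a (p ^ (k - l)) = 0 := by
    simpa only [prod_factorization_prime_pow hp (hA p hpmem)] using hrec p hpmem k hk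
  rw [if_neg hnD, mul_zero, hN, sum_divisors_gcd_prime_pow_mul hp
    (isMultiplicativeAt_prod_factorization hp) (ha p hpmem) hpn' hpN, hlocal, zero_mul]

/-- Lemma 3.2: if `D` is squarefree and `a`, with `a(1) = 1`, splits polynomially at every prime
`p | D`, then for every `n ≥ 1` one has
`a(n)·𝟙[gcd(n,D)=1] = ∑_{m | gcd(n,D*)} B_m a(n/m)`. -/
theorem indicator_coprime_eq_sum_divisors
    (D : ℕ) (hD : 0 < D) (hsq : Squarefree D)
    (a : ℕ → ℂ) (ha1 : a 1 = 1)
    (dd : ℕ → ℕ) (A : ℕ → ℕ → ℂ)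
    (hsplit : ∀ p : ℕ, p.Prime → p ∣ D → SplitsPolynomiallyAt a dd A p)
    (n : ℕ) (hn : 0 < n) :
    a n * (if Nat.gcd n D = 1 then 1 else 0) =
      ∑ m ∈ (Nat.gcd n (Dstar D dd)).divisors, Bcoef A m * a (n / m) := by
  have hsplit' (p : ℕ) (hp : p ∈ D.primeFactors) : SplitsPolynomiallyAt a dd A p :=
    hsplit p (Nat.prime_of_mem_primeFactors hp) (Nat.dvd_of_mem_primeFactors hp)
  exact indicator_coprime_eq_sum_divisors_general hD.ne' (fun p hp ↦ (hsplit' p hp).1)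
    (fun p hp ↦ (hsplit' p hp).2.1) (fun p hp ↦ (hsplit' p hp).2.2.2) hn.ne'
end

section
/- Let D be a positive integer and let a : ℕ≥1 → ℂ. Then a is saturated (mod D) if and only if for every positive integer M the family of sequences (n ↦ χ(n)·a(n)·𝟙[gcd(n,M)=1]), indexed by the Dirichlet characters χ (mod D), is linearly independent over ℂ; that is, if and only if for every positive integer M and every choice of complex coefficients (c_χ)_{χ (mod D)}, the relation Σ_{χ (mod D)} c_χ · χ(n) · a(n) = 0 for all positive integers n with gcd(n,M)=1 forces c_χ = 0 for every χ. -/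
/-!
A relation `∑ c_χ χ(n) a(n) = 0` can be divided by `a(n)` wherever `a(n) ≠ 0`. If such `n` meet
every unit class modulo `D`, it becomes a relation between the characters themselves, and these
are linearly independent. Conversely, if `a` vanishes at every admissible `n` in the class of a
unit `u`, then by column orthogonality the coefficients `c_χ = χ(u⁻¹)` give a nontrivial relation.
-/

/-- A sequence `a : ℕ → ℂ` (on positive integers) is saturated (mod D) if for every positive
integer `M` and every integer `b` coprime to `D` there is a positive integer `ν ≡ b (mod D)`
with `(ν, M) = 1` and `a(ν) ≠ 0`. -/
def IsSaturated (a : ℕ → ℂ) (D : ℕ) : Prop :=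
  ∀ M : ℕ, 0 < M → ∀ b : ℤ, b.gcd D = 1 →
    ∃ ν : ℕ, 0 < ν ∧ ((ν : ℤ) : ZMod D) = (b : ZMod D) ∧ Nat.gcd ν M = 1 ∧ a ν ≠ 0

section MulChar

variable {ι M R : Type*} [CommMonoid M] [CommRing R] [IsDomain R]

variable (M R) in
theorem linearIndependent_mulChar :
    LinearIndependent R fun χ : MulChar M R => (χ : M → R) :=
  (linearIndependent_monoidHom M R).comp (fun χ : MulChar M R => χ.toMonoidHom)
    fun _ _ h => MulChar.ext' fun u => DFunLike.congr_fun h u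

theorem linearIndependent_mulChar_mul_of_forall_isUnit {x : ι → M} {a : ι → R}
    (h : ∀ u, IsUnit u → ∃ i, x i = u ∧ a i ≠ 0) :
    LinearIndependent R fun (χ : MulChar M R) i => χ (x i) * a i := by
  have characters := linearIndependent_mulChar M R
  rw [linearIndependent_iff'] at characters ⊢
  intro s c relation
  refine characters s c (funext fun u => ?_)
  simp only [Finset.sum_apply, Pi.smul_apply, smul_eq_mul, Pi.zero_apply]
  by_cases hu : IsUnit u
  · obtain ⟨i, rfl, hai⟩ := h u hu
    have relation_at_i : (∑ χ ∈ s, c χ * χ (x i)) * a i = 0 := by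
      simpa [Finset.sum_mul, mul_assoc] using congrFun relation i
    exact (mul_eq_zero.1 relation_at_i).resolve_right hai
  · exact Finset.sum_eq_zero fun χ _ => by rw [χ.map_nonunit hu, mul_zero]

end MulChar

section DirichletCharacter

variable {ι R : Type*} [CommRing R] [IsDomain R] {D : ℕ} [NeZero D]
  [HasEnoughRootsOfUnity R (Monoid.exponent (ZMod D)ˣ)] {x : ι → ZMod D} {a : ι → R}

theorem exists_ne_zero_of_linearIndependent_dirichletCharacter_mul
    (h : LinearIndependent R fun (χ : DirichletCharacter R D) i => χ (x i) * a i)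
    {u : ZMod D} (hu : IsUnit u) : ∃ i, x i = u ∧ a i ≠ 0 := by
  by_contra! vanishing
  have relation : ∑ χ : DirichletCharacter R D, χ u⁻¹ • (fun i => χ (x i) * a i) = 0 := by
    funext i
    simp only [Finset.sum_apply, Pi.smul_apply, smul_eq_mul, Pi.zero_apply, ← mul_assoc,
      ← Finset.sum_mul, DirichletCharacter.sum_char_inv_mul_char_eq R hu]
    split_ifs with hux
    · rw [vanishing i hux.symm, mul_zero]
    · exact zero_mul _
  have coeff_one : (1 : DirichletCharacter R D) u⁻¹ = 0 :=
    Fintype.linearIndependent_iff.1 h _ relation 1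
  have isUnit_inv : IsUnit u⁻¹ := .of_mul_eq_one _ (ZMod.inv_mul_of_unit _ hu)
  exact one_ne_zero ((MulChar.one_apply isUnit_inv).symm.trans coeff_one)

theorem isSaturated_iff_twists_linearIndependent_general :
    (∀ u, IsUnit u → ∃ i, x i = u ∧ a i ≠ 0) ↔
      LinearIndependent R fun (χ : DirichletCharacter R D) i => χ (x i) * a i :=
  ⟨linearIndependent_mulChar_mul_of_forall_isUnit,
    fun h _ => exists_ne_zero_of_linearIndependent_dirichletCharacter_mul h⟩

end DirichletCharacter

theorem isSaturated_iff_forall_isUnit (a : ℕ → ℂ) (D : ℕ) :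
    IsSaturated a D ↔ ∀ M : ℕ, 0 < M → ∀ u : ZMod D, IsUnit u →
      ∃ n : {n : ℕ // 0 < n ∧ n.gcd M = 1}, ((n : ℕ) : ZMod D) = u ∧ a n ≠ 0 := by
  have isUnit_iff (b : ℤ) : IsUnit (b : ZMod D) ↔ b.gcd D = 1 := by
    rw [ZMod.coe_int_isUnit_iff_isCoprime, isCoprime_comm, Int.isCoprime_iff_gcd_eq_one]
  simp only [IsSaturated, ZMod.intCast_surjective.forall, isUnit_iff, Subtype.exists,
    exists_prop, Int.cast_natCast, and_assoc, and_left_comm]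

/-- `a` is saturated (mod D) if and only if for every positive integer `M` the sequences
`n ↦ χ(n) a(n)` restricted to `(n, M) = 1`, indexed by the Dirichlet characters `χ (mod D)`,
are linearly independent over `ℂ`. -/
theorem isSaturated_iff_twists_linearIndependent
    (D : ℕ) (hD : 0 < D) (a : ℕ → ℂ) :
    IsSaturated a D ↔
      ∀ M : ℕ, 0 < M → ∀ c : DirichletCharacter ℂ D → ℂ,
        (∀ n : ℕ, 0 < n → Nat.gcd n M = 1 →
          ∑ χ : DirichletCharacter ℂ D, c χ * χ (n : ZMod D) * a n = 0) →
        ∀ χ : DirichletCharacter ℂ D, c χ = 0 := by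
  have : NeZero D := ⟨hD.ne'⟩
  rw [isSaturated_iff_forall_isUnit]
  refine forall₂_congr fun M _ => ?_
  rw [isSaturated_iff_twists_linearIndependent_general, Fintype.linearIndependent_iff]
  simp only [funext_iff, Finset.sum_apply, Pi.smul_apply, smul_eq_mul, Pi.zero_apply,
    Subtype.forall, and_imp, mul_assoc]
end

section
/- Let 0 < λ ≤ 1/2, let α be a real number, let β > 0 and q > 0, and set q_F = (4π)²·q. Define Φ(z,ξ) = z^{1/2} − 2πqβ·z/ξ − 2πα·q^λ·z^λ/ξ^λ for z, ξ > 0. Suppose x₀ : (T,∞) → (0,∞) (for some T > 0) satisfies, for all ξ > T, the critical-point equation x₀(ξ)^{1/2} = 4πqβ·x₀(ξ)/ξ + 4παλ·q^λ·(x₀(ξ)/ξ)^λ, and suppose there exists η > 0 such that x₀(ξ)/ξ = (4π/(β q_F))²·ξ + O(ξ^{1−η}) as ξ → ∞. Then, as ξ → ∞, (1/(2π))·Φ(x₀(ξ), ξ) = ξ/(q_F β) − (α/(β^{2λ} q_F^{λ}))·ξ^{λ} + o(ξ^{λ}). -/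
/-!
Write `x₀(ξ) = (s(ξ) ξ)²` and `A = 4πqβ`. The hypothesis on `x₀` gives `s → 1/A`, and the
critical-point equation, divided by `s ξ`, then shows `1 - A s = O(ξ^(λ-1))`. Completing the square
in the first two terms of `Φ`, `s ξ - (A/2) s² ξ = ξ/(2A) - ξ (1 - A s)²/(2A)`, makes this deviation
enter only quadratically, so that it contributes `O(ξ^(2λ-1)) = o(ξ^λ)`. The remaining term of `Φ`
is a constant multiple of `s^(2λ) ξ^λ`, where `s^(2λ) → A^(-2λ)`.
-/

open Filter Asymptotics

/-- `Φ(z,ξ) = z^{1/2} − 2πqβ z/ξ − 2πα q^λ z^λ/ξ^λ`. -/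
noncomputable def Phi (q β α lam : ℝ) (z ξ : ℝ) : ℝ :=
  z ^ ((1 : ℝ) / 2) - 2 * Real.pi * q * β * z / ξ -
    2 * Real.pi * α * q ^ lam * z ^ lam / ξ ^ lam

open scoped Topology

lemma isLittleO_mul_sub_const_mul_of_tendsto {ι 𝕜 : Type*} [NormedField 𝕜] {l : Filter ι}
    {u g : ι → 𝕜} {c : 𝕜} (hu : Tendsto u l (𝓝 c)) : (fun i ↦ u i * g i - c * g i) =o[l] g := by
  have hsub : (fun i ↦ u i - c) =o[l] fun _ ↦ (1 : 𝕜) :=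
    (isLittleO_one_iff 𝕜).2 (tendsto_sub_nhds_zero_iff.2 hu)
  simpa only [sub_mul, one_mul] using hsub.mul_isBigO (isBigO_refl g l)

lemma isLittleO_rpow_rpow_atTop {a b : ℝ} (hab : a < b) :
    (fun x : ℝ ↦ x ^ a) =o[atTop] fun x ↦ x ^ b := by
  have hmul := isLittleO_mul_sub_const_mul_of_tendsto (g := fun x : ℝ ↦ x ^ b)
    (tendsto_rpow_neg_atTop (sub_pos.2 hab))
  refine hmul.congr' ?_ .rfl
  filter_upwards [eventually_gt_atTop 0] with x hx
  rw [zero_mul, sub_zero, ← Real.rpow_add hx]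
  ring_nf

lemma tendsto_div_sq_of_isBigO {x : ℝ → ℝ} {c η : ℝ} (hη : 0 < η)
    (h : (fun ξ ↦ x ξ / ξ - c * ξ) =O[atTop] fun ξ ↦ ξ ^ (1 - η)) :
    Tendsto (fun ξ ↦ x ξ / ξ ^ 2) atTop (𝓝 c) := by
  have hpow : (fun ξ : ℝ ↦ ξ ^ (1 - η)) =o[atTop] fun ξ ↦ ξ := by
    simpa only [Real.rpow_one] using isLittleO_rpow_rpow_atTop (sub_lt_self 1 hη)
  have hlim := (h.trans_isLittleO hpow).tendsto_div_nhds_zero.add_const c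
  rw [zero_add] at hlim
  refine hlim.congr' ?_
  filter_upwards [eventually_ne_atTop 0] with ξ hξ
  field_simp
  ring

section Rescaled

variable {A B lam : ℝ} {s : ℝ → ℝ}

lemma isBigO_one_sub_mul_of_critical {L : ℝ} (hL : L ≠ 0) (hs : Tendsto s atTop (𝓝 L))
    (hcrit : ∀ᶠ ξ in atTop,
      s ξ * ξ = A * (s ξ ^ 2 * ξ) + B * (s ξ ^ (2 * lam) * ξ ^ lam)) :
    (fun ξ ↦ 1 - A * s ξ) =O[atTop] fun ξ ↦ ξ ^ (lam - 1) := by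
  have hcoeff : (fun ξ ↦ B * s ξ ^ (2 * lam) / s ξ) =O[atTop] fun _ ↦ (1 : ℝ) :=
    (((hs.rpow_const (Or.inl hL)).const_mul B).div hs hL).isBigO_one ℝ
  have hsolve : (fun ξ ↦ B * s ξ ^ (2 * lam) / s ξ * ξ ^ (lam - 1)) =ᶠ[atTop]
      fun ξ ↦ 1 - A * s ξ := by
    filter_upwards [hcrit, hs.eventually_ne hL, eventually_ne_atTop 0] with ξ hξ hsξ hξ0
    rw [Real.rpow_sub_one hξ0]
    field_simp
    linear_combination -hξ
  simpa only [one_mul] using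
    (hcoeff.mul (isBigO_refl (fun ξ : ℝ ↦ ξ ^ (lam - 1)) atTop)).congr' hsolve .rfl

lemma isLittleO_mul_sq_of_isBigO_rpow {d : ℝ → ℝ} (hlam : lam < 1)
    (hd : d =O[atTop] fun ξ ↦ ξ ^ (lam - 1)) :
    (fun ξ ↦ ξ * d ξ ^ 2) =o[atTop] fun ξ ↦ ξ ^ lam := by
  have hsq : (fun ξ ↦ ξ * d ξ ^ 2) =O[atTop] fun ξ ↦ ξ * (ξ ^ (lam - 1)) ^ 2 :=
    (isBigO_refl _ _).mul (hd.pow 2)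
  have hpow : (fun ξ : ℝ ↦ ξ ^ (2 * lam - 1)) =ᶠ[atTop] fun ξ ↦ ξ * (ξ ^ (lam - 1)) ^ 2 := by
    filter_upwards [eventually_gt_atTop 0] with ξ hξ
    rw [Real.rpow_sub_one hξ.ne', Real.rpow_sub_one hξ.ne', two_mul, Real.rpow_add hξ]
    field_simp
  exact (hsq.congr' .rfl hpow.symm).trans_isLittleO (isLittleO_rpow_rpow_atTop (by linarith))

lemma isLittleO_expansion_of_critical (C : ℝ) (hA : A ≠ 0) (hlam : lam < 1)
    (hs : Tendsto s atTop (𝓝 A⁻¹))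
    (hcrit : ∀ᶠ ξ in atTop,
      s ξ * ξ = A * (s ξ ^ 2 * ξ) + B * (s ξ ^ (2 * lam) * ξ ^ lam)) :
    (fun ξ ↦ s ξ * ξ - A / 2 * (s ξ ^ 2 * ξ) - C * (s ξ ^ (2 * lam) * ξ ^ lam) -
        (ξ / (2 * A) - C * (A⁻¹ ^ (2 * lam) * ξ ^ lam)))
      =o[atTop] fun ξ ↦ ξ ^ lam := by
  have hA' : A⁻¹ ≠ 0 := inv_ne_zero hA
  have hsquare : (fun ξ ↦ ξ * (1 - A * s ξ) ^ 2) =o[atTop] fun ξ ↦ ξ ^ lam :=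
    isLittleO_mul_sq_of_isBigO_rpow hlam (isBigO_one_sub_mul_of_critical hA' hs hcrit)
  have hpower : (fun ξ ↦ s ξ ^ (2 * lam) * ξ ^ lam - A⁻¹ ^ (2 * lam) * ξ ^ lam)
      =o[atTop] fun ξ ↦ ξ ^ lam :=
    isLittleO_mul_sub_const_mul_of_tendsto (hs.rpow_const (Or.inl hA'))
  refine ((hsquare.const_mul_left (-(2 * A)⁻¹)).sub (hpower.const_mul_left C)).congr_left
    fun ξ ↦ ?_
  field_simp
  ring

end Rescaled

lemma exists_tendsto_eq_mul_sq {x : ℝ → ℝ} {c : ℝ} (hc : 0 < c)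
    (hx : Tendsto (fun ξ ↦ x ξ / ξ ^ 2) atTop (𝓝 (c ^ 2))) :
    ∃ s : ℝ → ℝ, (∀ ξ, 0 ≤ s ξ) ∧ Tendsto s atTop (𝓝 c) ∧
      ∀ᶠ ξ in atTop, x ξ = (s ξ * ξ) ^ 2 := by
  refine ⟨fun ξ ↦ √(x ξ / ξ ^ 2), fun _ ↦ Real.sqrt_nonneg _, ?_, ?_⟩
  · simpa only [Real.sqrt_sq hc.le] using hx.sqrt
  · filter_upwards [hx.eventually_const_lt (pow_pos hc 2), eventually_ne_atTop 0] with ξ hpos hξ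
    rw [mul_pow, Real.sq_sqrt hpos.le, div_mul_cancel₀ _ (pow_ne_zero 2 hξ)]

section MulSq

variable {s ξ : ℝ}

lemma mul_sq_rpow_half (hs : 0 ≤ s) (hξ : 0 ≤ ξ) : ((s * ξ) ^ 2) ^ ((1 : ℝ) / 2) = s * ξ := by
  rw [← Real.sqrt_eq_rpow, Real.sqrt_sq (mul_nonneg hs hξ)]

lemma mul_sq_div_self (s ξ : ℝ) : (s * ξ) ^ 2 / ξ = s ^ 2 * ξ := by
  rw [mul_pow, mul_div_assoc, sq ξ, mul_self_div_self]

lemma mul_sq_div_self_rpow (lam : ℝ) (hs : 0 ≤ s) (hξ : 0 ≤ ξ) :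
    ((s * ξ) ^ 2 / ξ) ^ lam = s ^ (2 * lam) * ξ ^ lam := by
  rw [mul_sq_div_self, Real.mul_rpow (sq_nonneg s) hξ, Real.rpow_mul hs, Real.rpow_two]

lemma critical_mul_sq_iff {A B lam : ℝ} (hs : 0 ≤ s) (hξ : 0 ≤ ξ) :
    ((s * ξ) ^ 2) ^ ((1 : ℝ) / 2) =
        A * ((s * ξ) ^ 2 / ξ) + B * ((s * ξ) ^ 2 / ξ) ^ lam ↔
      s * ξ = A * (s ^ 2 * ξ) + B * (s ^ (2 * lam) * ξ ^ lam) := by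
  rw [mul_sq_rpow_half hs hξ, mul_sq_div_self_rpow lam hs hξ, mul_sq_div_self]

lemma Phi_mul_sq (q β α lam : ℝ) (hs : 0 ≤ s) (hξ : 0 ≤ ξ) :
    Phi q β α lam ((s * ξ) ^ 2) ξ =
      s * ξ - 4 * Real.pi * q * β / 2 * (s ^ 2 * ξ) -
        2 * Real.pi * α * q ^ lam * (s ^ (2 * lam) * ξ ^ lam) := by
  rw [Phi, mul_sq_rpow_half hs hξ, mul_div_assoc, mul_sq_div_self, mul_div_assoc _ _ (ξ ^ lam),
    ← Real.div_rpow (sq_nonneg _) hξ, mul_sq_div_self_rpow lam hs hξ]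
  ring

end MulSq

lemma rpow_mul_inv_rpow_two_mul (lam : ℝ) {β q : ℝ} (hβ : 0 < β) (hq : 0 < q) :
    q ^ lam * (4 * Real.pi * q * β)⁻¹ ^ (2 * lam) =
      (β ^ (2 * lam) * ((4 * Real.pi) ^ 2 * q) ^ lam)⁻¹ := by
  rw [Real.rpow_mul (by positivity), Real.rpow_mul hβ.le, Real.rpow_two, Real.rpow_two,
    ← Real.mul_rpow (by positivity) (by positivity),
    ← Real.mul_rpow (by positivity) (by positivity), ← Real.inv_rpow (by positivity)]
  congr 1
  field_simp

theorem phi_asymptotic_expansion_general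
    (lam α β q : ℝ) (hlam : lam < 1) (hβ : 0 < β) (hq : 0 < q)
    (qF : ℝ) (hqF : qF = (4 * Real.pi) ^ 2 * q) (x₀ : ℝ → ℝ)
    (hcrit : ∀ᶠ ξ in atTop,
      x₀ ξ ^ ((1 : ℝ) / 2) =
        4 * Real.pi * q * β * (x₀ ξ / ξ) +
          4 * Real.pi * α * lam * q ^ lam * (x₀ ξ / ξ) ^ lam)
    (hx₀ : Tendsto (fun ξ ↦ x₀ ξ / ξ ^ 2) atTop (𝓝 ((4 * Real.pi / (β * qF)) ^ 2))) :
    (fun ξ : ℝ ↦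
        1 / (2 * Real.pi) * Phi q β α lam (x₀ ξ) ξ -
          (ξ / (qF * β) - α / (β ^ (2 * lam) * qF ^ lam) * ξ ^ lam))
      =o[atTop] fun ξ : ℝ ↦ ξ ^ lam := by
  subst hqF
  have hA : 0 < 4 * Real.pi * q * β := by positivity
  have hlimit : 4 * Real.pi / (β * ((4 * Real.pi) ^ 2 * q)) = (4 * Real.pi * q * β)⁻¹ := by
    field_simp
  rw [hlimit] at hx₀
  obtain ⟨s, hs0, hs, hx₀s⟩ := exists_tendsto_eq_mul_sq (inv_pos.2 hA) hx₀
  have hcrit_s : ∀ᶠ ξ in atTop, s ξ * ξ = 4 * Real.pi * q * β * (s ξ ^ 2 * ξ) +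
      4 * Real.pi * α * lam * q ^ lam * (s ξ ^ (2 * lam) * ξ ^ lam) := by
    filter_upwards [hcrit, hx₀s, eventually_ge_atTop 0] with ξ hc hx hξ
    rwa [hx, critical_mul_sq_iff (hs0 ξ) hξ] at hc
  refine ((isLittleO_expansion_of_critical (2 * Real.pi * α * q ^ lam) hA.ne' hlam hs
    hcrit_s).const_mul_left (1 / (2 * Real.pi))).congr' ?_ .rfl
  filter_upwards [hx₀s, eventually_ge_atTop 0] with ξ hx hξ
  rw [hx, Phi_mul_sq q β α lam (hs0 ξ) hξ, div_eq_mul_inv α,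
    ← rpow_mul_inv_rpow_two_mul lam hβ hq]
  field_simp
  ring

/-- Asymptotic expansion of `Φ` at the critical point: if `0 < λ ≤ 1/2`, `β, q > 0`,
`q_F = (4π)² q`, and `x₀(ξ)` satisfies the critical-point equation
`x₀^{1/2} = 4πqβ x₀/ξ + 4παλ q^λ (x₀/ξ)^λ` for `ξ > T`, together with
`x₀(ξ)/ξ = (4π/(β q_F))² ξ + O(ξ^{1−η})` for some `η > 0`, then
`(1/2π) Φ(x₀(ξ), ξ) = ξ/(q_F β) − (α/(β^{2λ} q_F^λ)) ξ^λ + o(ξ^λ)` as `ξ → ∞`. -/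
theorem phi_asymptotic_expansion
    (lam α β q : ℝ) (hlam0 : 0 < lam) (hlam : lam ≤ 1 / 2)
    (hβ : 0 < β) (hq : 0 < q)
    (qF : ℝ) (hqF : qF = (4 * Real.pi) ^ 2 * q)
    (T : ℝ) (hT : 0 < T)
    (x₀ : ℝ → ℝ) (hx₀pos : ∀ ξ : ℝ, T < ξ → 0 < x₀ ξ)
    (hcrit : ∀ ξ : ℝ, T < ξ →
      x₀ ξ ^ ((1 : ℝ) / 2) =
        4 * Real.pi * q * β * (x₀ ξ / ξ) +
          4 * Real.pi * α * lam * q ^ lam * (x₀ ξ / ξ) ^ lam)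
    (hη : ∃ η : ℝ, 0 < η ∧
      (fun ξ : ℝ => x₀ ξ / ξ - (4 * Real.pi / (β * qF)) ^ 2 * ξ)
        =O[atTop] fun ξ : ℝ => ξ ^ (1 - η)) :
    (fun ξ : ℝ =>
        1 / (2 * Real.pi) * Phi q β α lam (x₀ ξ) ξ -
          (ξ / (qF * β) - α / (β ^ (2 * lam) * qF ^ lam) * ξ ^ lam))
      =o[atTop] fun ξ : ℝ => ξ ^ lam := by
  obtain ⟨η, hη0, hO⟩ := hη
  exact phi_asymptotic_expansion_general lam α β q (hlam.trans_lt one_half_lt_one) hβ hq qF hqF x₀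
    ((eventually_gt_atTop T).mono hcrit) (tendsto_div_sq_of_isBigO hη0 hO)
end
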